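/- For every δ > 0 there exist N > 0, B > 0 and α > 0 such that for all n ≥ N, the Lebesgue measure of the set of irrational x ∈ [0,1) with |(1/n)·log q_n(x) − π²/(12·log 2)| ≥ δ is at most B·exp(−α·n). -/

import Mathlib

open Filter MeasureTheory Real Topology

/-- `cfQ a n` is the continued fraction denominator `Q_{n-1}` of the sequence
`a 1, a 2, …` (so `cfQ a 0 = Q_{-1} = 0`, `cfQ a 1 = Q_0 = 1`, and
`Q_n = a_n Q_{n-1} + Q_{n-2}` for `n ≥ 1`). -/
def cfQ (a : ℕ → ℕ) : ℕ → ℤ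
  | 0 => 0
  | 1 => 1
  | n + 2 => (a (n + 1) : ℤ) * cfQ a (n + 1) + cfQ a n

/-- The Gauss map `T x = 1/x − ⌊1/x⌋` for `x ≠ 0`, `T 0 = 0`
(note `(0 : ℝ)⁻¹ = 0` in Lean, so `Int.fract x⁻¹` covers both cases). -/
noncomputable def gaussMap (x : ℝ) : ℝ := Int.fract x⁻¹

/-- The `n`-th partial quotient of `x` (for `n ≥ 1`):
`a_1(x) = ⌊1/x⌋` and `a_n(x) = a_1(T^{n−1} x)`. -/
noncomputable def pq (x : ℝ) (n : ℕ) : ℕ := (⌊(gaussMap^[n - 1] x)⁻¹⌋).toNat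

/-- The denominator `q_n(x)` of the `n`-th convergent `[a_1(x), …, a_n(x)]`. -/
noncomputable def qden (x : ℝ) (n : ℕ) : ℤ := cfQ (pq x) (n + 1)

/-!
Under the Gauss measure, the Gauss map read backwards is the Markov chain that jumps from `x` to
`1 / (k + 1 + x)` with probability `(1 + x) / ((k + 1 + x) * (k + 2 + x))`. Its averaging operator
`P` multiplies Lipschitz constants on `[0, 1]` by at most `7 / 8`. For `f = -log` the function `P f`
is Lipschitz, so the iterates `P ^ m f` converge uniformly to the mean `π ^ 2 / (12 * log 2)` of
`f`, and summing finitely many of them gives a bounded `v` with `P f + P v - v = ∫ f` up to `ε`: an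
approximate solution of the Poisson equation. Conditionally on `x`, the increment `f z + v z - v x`
therefore has mean within `ε` of `∫ f` and a bounded exponential moment; these moments multiply
along the chain, and Markov's inequality bounds the deviations of the Birkhoff sums of `f`.
Finally `q_n * ∏ i < n, T ^ i x + q_(n-1) * ∏ i < n + 1, T ^ i x = 1` shows that `log q_n` is within
`log 2` of the `n`-th Birkhoff sum.
-/

open ProbabilityTheory

/-! ### Exponential moments -/

theorem exp_le_one_add_add_sq_mul_exp_abs (x : ℝ) : exp x ≤ 1 + x + x ^ 2 * exp |x| := by
  have h := Complex.norm_exp_sub_sum_le_norm_mul_exp x 2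
  have hsum : ∑ m ∈ Finset.range 2, (x : ℂ) ^ m / m.factorial = ((1 + x : ℝ) : ℂ) := by
    simp [Finset.sum_range_succ]
  rw [hsum, ← Complex.ofReal_exp, ← Complex.ofReal_sub, Complex.norm_real, Complex.norm_real,
    norm_eq_abs, norm_eq_abs, sq_abs] at h
  linarith [le_abs_self (exp x - (1 + x))]

theorem exp_mul_le {s t x : ℝ} (hs : 0 < s) (hts : |t| ≤ s) :
    exp (t * x) ≤ 1 + t * x + 2 * (t / s) ^ 2 * exp (2 * s * |x|) := by
  have hquad : x ^ 2 ≤ 2 / s ^ 2 * exp (s * |x|) := by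
    have h := quadratic_le_exp_of_nonneg (x := s * |x|) (by positivity)
    rw [div_mul_eq_mul_div, le_div_iff₀ (by positivity)]
    nlinarith [sq_abs x, mul_nonneg hs.le (abs_nonneg x)]
  calc exp (t * x) ≤ 1 + t * x + (t * x) ^ 2 * exp |t * x| :=
        exp_le_one_add_add_sq_mul_exp_abs _
    _ ≤ 1 + t * x + t ^ 2 * (2 / s ^ 2 * exp (s * |x|)) * exp (s * |x|) := by
        rw [mul_pow, abs_mul]
        gcongr
    _ = 1 + t * x + 2 * (t / s) ^ 2 * exp (2 * s * |x|) := by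
        rw [two_mul s, add_mul, exp_add]
        ring

section Moments

variable {Ω : Type*} [MeasurableSpace Ω] {ν : Measure Ω} {X : Ω → ℝ} {s : ℝ}

theorem integrable_of_integrable_exp_mul_abs (hs : 0 < s) (hX : AEStronglyMeasurable X ν)
    (hexp : Integrable (fun ω => exp (s * |X ω|)) ν) : Integrable X ν := by
  refine (hexp.div_const s).mono' hX (ae_of_all _ fun ω => ?_)
  rw [norm_eq_abs, le_div_iff₀ hs]
  linarith [add_one_le_exp (s * |X ω|)]

theorem lintegral_exp_mul_le [IsProbabilityMeasure ν] (hs : 0 < s) (hX : AEStronglyMeasurable X ν)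
    (hexp : Integrable (fun ω => exp (2 * s * |X ω|)) ν) {t : ℝ} (hts : |t| ≤ s) :
    ∫⁻ ω, ENNReal.ofReal (exp (t * X ω)) ∂ν ≤
      ENNReal.ofReal (exp (t * ∫ ω, X ω ∂ν +
        2 * (t / s) ^ 2 * ∫ ω, exp (2 * s * |X ω|) ∂ν)) := by
  have hXint := integrable_of_integrable_exp_mul_abs (by positivity) hX hexp
  have hlin : Integrable (fun ω => 1 + t * X ω) ν := (integrable_const 1).add (hXint.const_mul t)
  have hint := hlin.add (hexp.const_mul (2 * (t / s) ^ 2))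
  have hbound (ω : Ω) := exp_mul_le (x := X ω) hs hts
  calc ∫⁻ ω, ENNReal.ofReal (exp (t * X ω)) ∂ν
      ≤ ∫⁻ ω, ENNReal.ofReal (1 + t * X ω + 2 * (t / s) ^ 2 * exp (2 * s * |X ω|)) ∂ν :=
        lintegral_mono fun ω => ENNReal.ofReal_le_ofReal (hbound ω)
    _ = ENNReal.ofReal (∫ ω, 1 + t * X ω + 2 * (t / s) ^ 2 * exp (2 * s * |X ω|) ∂ν) :=
        (ofReal_integral_eq_lintegral_ofReal hint
          (ae_of_all _ fun ω => (exp_pos _).le.trans (hbound ω))).symm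
    _ = ENNReal.ofReal ((t * ∫ ω, X ω ∂ν +
          2 * (t / s) ^ 2 * ∫ ω, exp (2 * s * |X ω|) ∂ν) + 1) := by
        rw [integral_add hlin (hexp.const_mul _), integral_add (integrable_const 1)
          (hXint.const_mul t), integral_const_mul, integral_const_mul, integral_const,
          probReal_univ, one_smul]
        ring_nf
    _ ≤ _ := ENNReal.ofReal_le_ofReal (add_one_le_exp _)

theorem lintegral_exp_mul_exp_le {φ v : Ω → ℝ} (hφ : Measurable φ) (hv : Measurable v) {b c : ℝ}
    (h : ∫⁻ ω, ENNReal.ofReal (exp (φ ω + v ω - b)) ∂ν ≤ ENNReal.ofReal (exp c)) :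
    ∫⁻ ω, ENNReal.ofReal (exp (φ ω)) * ENNReal.ofReal (exp (v ω)) ∂ν ≤
      ENNReal.ofReal (exp c) * ENNReal.ofReal (exp b) := by
  have hsplit (ω : Ω) : ENNReal.ofReal (exp (φ ω)) * ENNReal.ofReal (exp (v ω)) =
      ENNReal.ofReal (exp (φ ω + v ω - b)) * ENNReal.ofReal (exp b) := by
    rw [← ENNReal.ofReal_mul (exp_pos _).le, ← ENNReal.ofReal_mul (exp_pos _).le, ← exp_add,
      ← exp_add, sub_add_cancel]
  simp only [hsplit]
  rw [lintegral_mul_const _ (by fun_prop)]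
  gcongr

theorem lintegral_exp_mul_add_le [IsProbabilityMeasure ν] {φ u : Ω → ℝ}
    (hφ : Measurable φ) (hu : Measurable u) {M W ε t : ℝ} (hs : 0 < s)
    (hint : Integrable (fun ω => exp (2 * s * |φ ω|)) ν)
    (hM : ∫ ω, exp (2 * s * |φ ω|) ∂ν ≤ M)
    (hW : ∀ᵐ ω ∂ν, |u ω| ≤ W) (hε : |∫ ω, φ ω + u ω ∂ν| ≤ ε) (hts : |t| ≤ s) :
    ∫⁻ ω, ENNReal.ofReal (exp (t * (φ ω + u ω))) ∂ν ≤
      ENNReal.ofReal (exp (|t| * ε + 2 * (t / s) ^ 2 * (exp (2 * s * W) * M))) := by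
  have hle : ∀ᵐ ω ∂ν, exp (2 * s * |φ ω + u ω|) ≤ exp (2 * s * W) * exp (2 * s * |φ ω|) := by
    filter_upwards [hW] with ω hω
    rw [← exp_add, exp_le_exp, ← mul_add]
    gcongr
    linarith [abs_add_le (φ ω) (u ω)]
  have hint_add : Integrable (fun ω => exp (2 * s * |φ ω + u ω|)) ν :=
    (hint.const_mul (exp (2 * s * W))).mono' (by fun_prop)
      (hle.mono fun ω hω => by rwa [norm_eq_abs, abs_exp])
  refine (lintegral_exp_mul_le hs (by fun_prop) hint_add hts).trans
    (ENNReal.ofReal_le_ofReal (exp_le_exp.2 (add_le_add ?_ ?_)))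
  · calc t * ∫ ω, φ ω + u ω ∂ν ≤ |t| * |∫ ω, φ ω + u ω ∂ν| := by
          rw [← abs_mul]
          exact le_abs_self _
      _ ≤ |t| * ε := by gcongr
  · refine mul_le_mul_of_nonneg_left ?_ (by positivity)
    calc ∫ ω, exp (2 * s * |φ ω + u ω|) ∂ν ≤ ∫ ω, exp (2 * s * W) * exp (2 * s * |φ ω|) ∂ν :=
        integral_mono_ae hint_add (hint.const_mul _) hle
      _ ≤ exp (2 * s * W) * M := by
        rw [integral_const_mul]
        gcongr

theorem measure_le_abs_le_of_lintegral_exp_le {S : Ω → ℝ} (hS : Measurable S) {t c a : ℝ}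
    (ht : 0 ≤ t)
    (hpos : ∫⁻ ω, ENNReal.ofReal (exp (t * S ω)) ∂ν ≤ ENNReal.ofReal (exp c))
    (hneg : ∫⁻ ω, ENNReal.ofReal (exp (-t * S ω)) ∂ν ≤ ENNReal.ofReal (exp c)) :
    ν {ω | a ≤ |S ω|} ≤ ENNReal.ofReal (2 * exp (c - t * a)) := by
  have hsub : {ω | a ≤ |S ω|} ⊆ {ω | ENNReal.ofReal (exp (t * a)) ≤
      ENNReal.ofReal (exp (t * S ω)) + ENNReal.ofReal (exp (-t * S ω))} := by
    intro ω (hω : a ≤ |S ω|)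
    rcases abs_cases (S ω) with ⟨h, -⟩ | ⟨h, -⟩
    · refine le_add_right (ENNReal.ofReal_le_ofReal (exp_le_exp.2 ?_))
      exact mul_le_mul_of_nonneg_left (hω.trans_eq h) ht
    · refine le_add_left (ENNReal.ofReal_le_ofReal (exp_le_exp.2 ?_))
      rw [neg_mul_comm]
      exact mul_le_mul_of_nonneg_left (hω.trans_eq h) ht
  have hmarkov := mul_meas_ge_le_lintegral (μ := ν) (f := fun ω =>
    ENNReal.ofReal (exp (t * S ω)) + ENNReal.ofReal (exp (-t * S ω))) (by fun_prop)
    (ENNReal.ofReal (exp (t * a)))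
  rw [lintegral_add_left (by fun_prop)] at hmarkov
  have hexp : (2 * exp (c - t * a)) = (exp c + exp c) / exp (t * a) := by
    rw [exp_sub]
    ring
  rw [hexp, ENNReal.ofReal_div_of_pos (exp_pos _),
    ENNReal.ofReal_add (exp_pos _).le (exp_pos _).le,
    ENNReal.le_div_iff_mul_le (.inl (by simp [exp_pos])) (.inl ENNReal.ofReal_ne_top), mul_comm]
  refine le_trans ?_ (hmarkov.trans (add_le_add hpos hneg))
  gcongr

end Moments

/-! ### Deviations of Birkhoff sums along a time-reversed Markov chain -/

section ReversedChain

variable {α : Type*} [MeasurableSpace α] {κ : Kernel α α} {μ : Measure α} {T : α → α}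

theorem lintegral_prod_iterate_mul_le (hκ : κ.Invariant μ) (hT : Measurable T)
    (hTκ : ∀ᵐ x ∂μ, ∀ᵐ z ∂κ x, T z = x) {g h : α → ENNReal} (hg : Measurable g)
    (hh : Measurable h) {C : ENNReal} (hC : ∀ᵐ x ∂μ, ∫⁻ z, g z * h z ∂κ x ≤ C * h x) (n : ℕ) :
    ∫⁻ x, (∏ i ∈ Finset.range n, g (T^[i] x)) * h x ∂μ ≤ C ^ n * ∫⁻ x, h x ∂μ := by
  have hmeas (n : ℕ) : Measurable fun x => (∏ i ∈ Finset.range n, g (T^[i] x)) * h x :=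
    (Finset.measurable_prod _ fun i _ => hg.comp (hT.iterate i)).mul hh
  induction n with
  | zero => simp
  | succ n ih =>
    calc ∫⁻ x, (∏ i ∈ Finset.range (n + 1), g (T^[i] x)) * h x ∂μ
        = ∫⁻ x, ∫⁻ z, (∏ i ∈ Finset.range n, g (T^[i] (T z))) * (g z * h z) ∂κ x ∂μ := by
          conv_lhs => rw [← hκ.def]
          rw [Measure.lintegral_bind κ.aemeasurable (hmeas _).aemeasurable]
          simp only [Finset.prod_range_succ', Function.iterate_succ_apply,
            Function.iterate_zero, id_eq, mul_assoc]
      _ = ∫⁻ x, (∏ i ∈ Finset.range n, g (T^[i] x)) * ∫⁻ z, g z * h z ∂κ x ∂μ := by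
          refine lintegral_congr_ae (hTκ.mono fun x hx => ?_)
          dsimp only
          rw [← lintegral_const_mul _ (by fun_prop)]
          exact lintegral_congr_ae (hx.mono fun z hz => by simp only [hz])
      _ ≤ ∫⁻ x, C * ((∏ i ∈ Finset.range n, g (T^[i] x)) * h x) ∂μ :=
          lintegral_mono_ae (hC.mono fun x hx => by
            rw [mul_left_comm]
            gcongr)
      _ ≤ C ^ (n + 1) * ∫⁻ x, h x ∂μ := by
          rw [lintegral_const_mul _ (hmeas n), pow_succ', mul_assoc]
          gcongr

theorem lintegral_exp_birkhoffSum_le [IsProbabilityMeasure μ] (hκ : κ.Invariant μ)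
    (hT : Measurable T) (hTκ : ∀ᵐ x ∂μ, ∀ᵐ z ∂κ x, T z = x) {φ v : α → ℝ}
    (hφ : Measurable φ) (hv : Measurable v) {V : ℝ} (hV : ∀ᵐ x ∂μ, |v x| ≤ V) {c : ℝ}
    (hc : ∀ᵐ x ∂μ, ∫⁻ z, ENNReal.ofReal (exp (φ z + v z - v x)) ∂κ x ≤ ENNReal.ofReal (exp c))
    (n : ℕ) :
    ∫⁻ x, ENNReal.ofReal (exp (birkhoffSum T φ n x)) ∂μ ≤
      ENNReal.ofReal (exp (n * c + 2 * V)) := by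
  have hgh := hc.mono fun x hx => lintegral_exp_mul_exp_le hφ hv hx
  calc ∫⁻ x, ENNReal.ofReal (exp (birkhoffSum T φ n x)) ∂μ
      ≤ ∫⁻ x, ENNReal.ofReal (exp V) * ((∏ i ∈ Finset.range n,
          ENNReal.ofReal (exp (φ (T^[i] x)))) * ENNReal.ofReal (exp (v x))) ∂μ := by
        refine lintegral_mono_ae (hV.mono fun x hx => ?_)
        rw [← ENNReal.ofReal_prod_of_nonneg fun i _ => (exp_pos _).le, ← exp_sum,
          ← ENNReal.ofReal_mul (exp_pos _).le, ← ENNReal.ofReal_mul (exp_pos _).le, ← exp_add,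
          ← exp_add]
        refine ENNReal.ofReal_le_ofReal (exp_le_exp.2 ?_)
        rw [birkhoffSum]
        linarith [neg_le_of_abs_le hx]
    _ ≤ ENNReal.ofReal (exp V) * (ENNReal.ofReal (exp c) ^ n *
          ∫⁻ x, ENNReal.ofReal (exp (v x)) ∂μ) := by
        rw [lintegral_const_mul' _ _ ENNReal.ofReal_ne_top]
        gcongr
        exact lintegral_prod_iterate_mul_le hκ hT hTκ (by fun_prop) (by fun_prop) hgh n
    _ ≤ ENNReal.ofReal (exp V) * (ENNReal.ofReal (exp c) ^ n * ENNReal.ofReal (exp V)) := by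
        gcongr
        refine (lintegral_mono_ae (g := fun _ => ENNReal.ofReal (exp V)) (hV.mono fun x hx =>
          ENNReal.ofReal_le_ofReal (exp_le_exp.2 (le_of_abs_le hx)))).trans_eq ?_
        rw [lintegral_const, measure_univ, mul_one]
    _ = ENNReal.ofReal (exp (n * c + 2 * V)) := by
        rw [← ENNReal.ofReal_pow (exp_pos _).le, ← exp_nat_mul,
          ← ENNReal.ofReal_mul (exp_pos _).le, ← ENNReal.ofReal_mul (exp_pos _).le, ← exp_add,
          ← exp_add]
        ring_nf

variable [IsMarkovKernel κ]

theorem lintegral_exp_mul_birkhoffSum_sub_le [IsProbabilityMeasure μ] (hκ : κ.Invariant μ)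
    (hT : Measurable T) (hTκ : ∀ᵐ x ∂μ, ∀ᵐ z ∂κ x, T z = x) {φ v : α → ℝ}
    (hφ : Measurable φ) (hv : Measurable v) {s M V L ε t : ℝ} (hs : 0 < s)
    (hint : ∀ᵐ x ∂μ, Integrable (fun z => exp (2 * s * |φ z|)) (κ x))
    (hM : ∀ᵐ x ∂μ, ∫ z, exp (2 * s * |φ z|) ∂κ x ≤ M)
    (hV : ∀ᵐ x ∂μ, |v x| ≤ V)
    (hε : ∀ᵐ x ∂μ, |∫ z, φ z + v z - v x - L ∂κ x| ≤ ε) (hts : |t| ≤ s) (n : ℕ) :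
    ∫⁻ x, ENNReal.ofReal (exp (t * (birkhoffSum T φ n x - n * L))) ∂μ ≤
      ENNReal.ofReal (exp (n * (|t| * ε + 2 * (t / s) ^ 2 * (exp (2 * s * (2 * V + |L|)) * M))
        + 2 * (|t| * V))) := by
  have hsum (x : α) : t * (birkhoffSum T φ n x - n * L) =
      birkhoffSum T (fun y => t * (φ y - L)) n x := by
    simp [birkhoffSum, mul_sub, Finset.mul_sum, mul_left_comm]
  simp only [hsum]
  refine lintegral_exp_birkhoffSum_le hκ hT hTκ (v := fun x => t * v x) (by fun_prop) (by fun_prop)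
    (hV.mono fun x hx => ?_) ?_ n
  · rw [abs_mul]
    gcongr
  · have hVκ : ∀ᵐ x ∂μ, ∀ᵐ z ∂κ x, |v z| ≤ V :=
      Measure.ae_ae_of_ae_comp (hκ.def.symm ▸ hV : ∀ᵐ x ∂μ.bind κ, |v x| ≤ V)
    filter_upwards [hint, hM, hV, hε, hVκ] with x hintx hMx hVx hεx hVz
    have hW : ∀ᵐ z ∂κ x, |v z - v x - L| ≤ 2 * V + |L| := by
      filter_upwards [hVz] with z hz
      linarith [abs_sub (v z - v x) L, abs_sub (v z) (v x)]
    convert lintegral_exp_mul_add_le hφ (by fun_prop) hs hintx hMx hW (ε := ε) ?_ hts using 4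
    · congr 1
      ring
    · convert hεx using 4
      ring

theorem exists_measure_birkhoffSum_deviation_le [IsProbabilityMeasure μ] (hκ : κ.Invariant μ)
    (hT : Measurable T) (hTκ : ∀ᵐ x ∂μ, ∀ᵐ z ∂κ x, T z = x) {φ : α → ℝ} (hφ : Measurable φ)
    {s M L : ℝ} (hs : 0 < s)
    (hint : ∀ᵐ x ∂μ, Integrable (fun z => exp (2 * s * |φ z|)) (κ x))
    (hM : ∀ᵐ x ∂μ, ∫ z, exp (2 * s * |φ z|) ∂κ x ≤ M)
    (hL : ∀ ε > 0, ∃ v : α → ℝ, Measurable v ∧ (∃ V, ∀ᵐ x ∂μ, |v x| ≤ V) ∧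
      ∀ᵐ x ∂μ, |∫ z, φ z + v z - v x - L ∂κ x| ≤ ε)
    {δ : ℝ} (hδ : 0 < δ) (r : ℝ) :
    ∃ B > 0, ∃ a > 0, ∀ n : ℕ, μ {x | n * δ - r ≤ |birkhoffSum T φ n x - n * L|} ≤
      ENNReal.ofReal (B * exp (-a * n)) := by
  obtain ⟨v, hv, ⟨V, hV⟩, hε⟩ := hL (δ / 4) (by positivity)
  set K := exp (2 * s * (2 * V + |L|)) * M with hK
  obtain ⟨t, ht, hts, htK⟩ : ∃ t > 0, t ≤ s ∧ 2 * t / s ^ 2 * K ≤ δ / 4 := by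
    have hlim : Tendsto (fun t => 2 * t / s ^ 2 * K) (𝓝[>] 0) (𝓝 0) :=
      tendsto_nhdsWithin_of_tendsto_nhds (Continuous.tendsto' (by fun_prop) _ _ (by simp))
    obtain ⟨t, hlt, ht⟩ := ((hlim.eventually_le_const (by positivity : 0 < δ / 4)).and
      (Ioc_mem_nhdsGT hs)).exists
    exact ⟨t, ht.1, ht.2, hlt⟩
  refine ⟨2 * exp (2 * (t * V) + t * r), by positivity, t * δ / 2, by positivity, fun n => ?_⟩
  have hmeas : Measurable fun x => birkhoffSum T φ n x - n * L :=
    (Finset.measurable_sum _ fun i _ => hφ.comp (hT.iterate i)).sub_const _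
  have hmgf {u : ℝ} (hu : |u| = t) :
      ∫⁻ x, ENNReal.ofReal (exp (u * (birkhoffSum T φ n x - n * L))) ∂μ ≤
        ENNReal.ofReal (exp (n * (t * δ / 2) + 2 * (t * V))) := by
    refine (lintegral_exp_mul_birkhoffSum_sub_le hκ hT hTκ hφ hv hs hint hM hV hε
      (hu.trans_le hts) n).trans (ENNReal.ofReal_le_ofReal (exp_le_exp.2 ?_))
    rw [hu, ← hK, div_pow, ← sq_abs u, hu]
    gcongr
    linarith [mul_le_mul_of_nonneg_left htK ht.le,
      (by ring : 2 * (t ^ 2 / s ^ 2) * K = t * (2 * t / s ^ 2 * K))]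
  refine (measure_le_abs_le_of_lintegral_exp_le hmeas ht.le (hmgf (abs_of_pos ht))
    (hmgf ((abs_neg t).trans (abs_of_pos ht)))).trans_eq ?_
  rw [mul_assoc, ← exp_add]
  ring_nf

end ReversedChain

/-! ### The Gauss kernel and its invariant measure -/

/-- The inverse branches `x ↦ 1 / (k + 1 + x)` of the Gauss map, indexed from `k = 0`. -/
noncomputable def gaussBranch (k : ℕ) (x : ℝ) : ℝ := (k + 1 + x)⁻¹

/-- The conditional probability, under the Gauss measure, of the `k`-th inverse branch at `x`. -/
noncomputable def gaussWeight (k : ℕ) (x : ℝ) : ℝ := (1 + x) / ((k + 1 + x) * (k + 2 + x))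

section Branch

variable {x : ℝ}

theorem gaussBranch_mem_Ioc (k : ℕ) (hx : 0 ≤ x) : gaussBranch k x ∈ Set.Ioc (0 : ℝ) 1 :=
  ⟨by unfold gaussBranch; positivity,
    inv_le_one_of_one_le₀ (by linarith [k.cast_nonneg (α := ℝ)])⟩

theorem gaussBranch_mem_Icc (k : ℕ) (hx : 0 ≤ x) : gaussBranch k x ∈ Set.Icc (0 : ℝ) 1 :=
  Set.Ioc_subset_Icc_self (gaussBranch_mem_Ioc k hx)

theorem gaussMap_gaussBranch (k : ℕ) (hx : x ∈ Set.Ico (0 : ℝ) 1) :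
    gaussMap (gaussBranch k x) = x := by
  rw [gaussMap, gaussBranch, inv_inv, add_assoc, Int.fract_natCast_add, add_comm,
    Int.fract_add_one, Int.fract_eq_self.2 hx]

theorem injOn_gaussBranch (k : ℕ) : Set.InjOn (gaussBranch k) (Set.Ico 0 1) :=
  Set.LeftInvOn.injOn fun _ => gaussMap_gaussBranch k

theorem pairwise_disjoint_image_gaussBranch :
    Pairwise (Function.onFun Disjoint fun k => gaussBranch k '' Set.Ico 0 1) := by
  intro k l hkl
  refine Set.disjoint_left.2 ?_
  rintro _ ⟨x, hx, rfl⟩ ⟨y, hy, hyx⟩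
  obtain rfl : y = x := by
    rw [← gaussMap_gaussBranch k hx, ← gaussMap_gaussBranch l hy, hyx]
  refine hkl (Nat.cast_injective (R := ℝ) ?_)
  linarith [inv_injective hyx]

theorem iUnion_image_gaussBranch :
    ⋃ k, gaussBranch k '' Set.Ico 0 1 = Set.Ioc (0 : ℝ) 1 := by
  refine Set.Subset.antisymm (Set.iUnion_subset fun k => ?_) fun z hz => Set.mem_iUnion.2 ?_
  · rintro _ ⟨x, hx, rfl⟩
    exact gaussBranch_mem_Ioc k hx.1
  · have hz1 : 0 ≤ z⁻¹ - 1 := sub_nonneg.2 ((one_le_inv₀ hz.1).2 hz.2)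
    refine ⟨⌊z⁻¹ - 1⌋₊, Int.fract (z⁻¹ - 1), ⟨Int.fract_nonneg _, Int.fract_lt_one _⟩, ?_⟩
    rw [gaussBranch, natCast_floor_eq_intCast_floor hz1, add_right_comm, Int.floor_add_fract,
      sub_add_cancel, inv_inv]

theorem hasDerivAt_gaussBranch (k : ℕ) (hx : 0 ≤ x) :
    HasDerivAt (gaussBranch k) (-(1 / (k + 1 + x) ^ 2)) x := by
  rw [← neg_div]
  exact ((hasDerivAt_id x).const_add ((k : ℝ) + 1)).inv (by positivity)

theorem setLIntegral_Ioo_eq_tsum_gaussBranch (f : ℝ → ENNReal) :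
    ∫⁻ x in Set.Ioo 0 1, f x =
      ∑' k : ℕ, ∫⁻ x in Set.Ioo 0 1,
        ENNReal.ofReal (1 / (k + 1 + x) ^ 2) * f (gaussBranch k x) := by
  have hderiv (k : ℕ) (x : ℝ) (hx : x ∈ Set.Ico (0 : ℝ) 1) :=
    (hasDerivAt_gaussBranch k hx.1).hasDerivWithinAt (s := Set.Ico 0 1)
  rw [setLIntegral_congr Ioo_ae_eq_Ioc, ← iUnion_image_gaussBranch,
    lintegral_iUnion (fun k => measurableSet_Ico.image_of_continuousOn_injOn
      (fun x hx => (hderiv k x hx).continuousWithinAt) (injOn_gaussBranch k))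
      pairwise_disjoint_image_gaussBranch]
  refine tsum_congr fun k => ?_
  rw [lintegral_image_eq_lintegral_abs_deriv_mul measurableSet_Ico (hderiv k)
    (injOn_gaussBranch k), setLIntegral_congr Ioo_ae_eq_Ico.symm]
  simp only [abs_neg, abs_one_div, abs_sq]

end Branch

section Weight

variable {x : ℝ}

theorem gaussWeight_nonneg (k : ℕ) (hx : 0 ≤ x) : 0 ≤ gaussWeight k x := by
  unfold gaussWeight
  positivity

theorem sum_range_gaussWeight (hx : 0 ≤ x) (n : ℕ) :
    ∑ k ∈ Finset.range n, gaussWeight k x = 1 - (1 + x) / (n + 1 + x) := by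
  induction n with
  | zero => simp [div_self (by positivity : 1 + x ≠ 0)]
  | succ n ih =>
    rw [Finset.sum_range_succ, ih, gaussWeight]
    push_cast
    field_simp
    ring

theorem hasSum_gaussWeight (hx : 0 ≤ x) : HasSum (fun k => gaussWeight k x) 1 := by
  rw [hasSum_iff_tendsto_nat_of_nonneg fun k => gaussWeight_nonneg k hx]
  simp only [sum_range_gaussWeight hx, add_assoc]
  have hlim : Tendsto (fun n : ℕ => (1 + x) / (n + (1 + x))) atTop (𝓝 0) :=
    (tendsto_natCast_atTop_atTop.atTop_add tendsto_const_nhds).const_div_atTop (1 + x)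
  simpa using hlim.const_sub 1

theorem gaussWeight_zero (hx : 0 ≤ x) : gaussWeight 0 x = 1 / (2 + x) := by
  rw [gaussWeight]
  push_cast
  field_simp
  ring

end Weight

/-- The Markov kernel that moves `x` to its preimage `1 / (k + 1 + x)` under the Gauss map with
probability `gaussWeight k x`. Only `x ∈ [0, 1]` matters; the absolute values make it Markov on
all of `ℝ`. -/
noncomputable def gaussKernel : Kernel ℝ ℝ where
  toFun x := Measure.sum fun k : ℕ =>
    ENNReal.ofReal (gaussWeight k |x|) • Measure.dirac (gaussBranch k |x|)
  measurable' := by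
    refine Measure.measurable_of_measurable_coe _ fun s hs => ?_
    simp only [Measure.sum_apply _ hs, Measure.smul_apply, smul_eq_mul, Measure.dirac_apply' _ hs]
    unfold gaussWeight gaussBranch
    fun_prop (disch := measurability)

section Kernel

variable {x : ℝ}

theorem gaussKernel_apply (hx : 0 ≤ x) : gaussKernel x = Measure.sum fun k : ℕ =>
    ENNReal.ofReal (gaussWeight k x) • Measure.dirac (gaussBranch k x) := by
  conv_rhs => rw [← abs_of_nonneg hx]
  rfl

instance : IsMarkovKernel gaussKernel where
  isProbabilityMeasure x := ⟨by
    have hsum := hasSum_gaussWeight (abs_nonneg x)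
    change (Measure.sum fun k : ℕ =>
      ENNReal.ofReal (gaussWeight k |x|) • Measure.dirac (gaussBranch k |x|)) Set.univ = 1
    rw [Measure.sum_apply _ MeasurableSet.univ]
    simp only [Measure.smul_apply, measure_univ, smul_eq_mul, mul_one]
    rw [← ENNReal.ofReal_tsum_of_nonneg (fun k => gaussWeight_nonneg k (abs_nonneg x))
      hsum.summable, hsum.tsum_eq, ENNReal.ofReal_one]⟩

theorem ae_gaussKernel_of_forall (hx : 0 ≤ x) {p : ℝ → Prop} (hp : ∀ k, p (gaussBranch k x)) :
    ∀ᵐ z ∂gaussKernel x, p z := by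
  rw [gaussKernel_apply hx, Measure.ae_sum_iff]
  refine fun k => Measure.ae_smul_measure ?_ _
  rw [ae_dirac_eq]
  exact hp k

theorem lintegral_gaussKernel (hx : 0 ≤ x) (f : ℝ → ENNReal) :
    ∫⁻ z, f z ∂gaussKernel x =
      ∑' k, ENNReal.ofReal (gaussWeight k x) * f (gaussBranch k x) := by
  simp [gaussKernel_apply hx, lintegral_sum_measure, lintegral_smul_measure]

theorem integral_gaussKernel (hx : 0 ≤ x) (f : ℝ → ℝ) :
    ∫ z, f z ∂gaussKernel x = ∑' k, gaussWeight k x * f (gaussBranch k x) := by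
  rw [gaussKernel_apply hx, integral_sum_dirac fun k => ENNReal.ofReal_ne_top]
  simp only [ENNReal.toReal_ofReal (gaussWeight_nonneg _ hx), smul_eq_mul]

theorem integrable_gaussKernel_iff (hx : 0 ≤ x) {f : ℝ → ℝ} :
    Integrable f (gaussKernel x) ↔ Summable fun k => gaussWeight k x * |f (gaussBranch k x)| := by
  rw [gaussKernel_apply hx, integrable_sum_dirac_iff fun k => ENNReal.ofReal_ne_top]
  simp only [ENNReal.toReal_ofReal (gaussWeight_nonneg _ hx), norm_eq_abs]

end Kernel

/-- The Gauss measure `dx / ((1 + x) log 2)` on `(0, 1)`. -/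
noncomputable def gaussMeasure : Measure ℝ :=
  (volume.restrict (Set.Ioo 0 1)).withDensity fun x => ENNReal.ofReal (1 / (log 2 * (1 + x)))

theorem invariant_gaussKernel_gaussMeasure : gaussKernel.Invariant gaussMeasure := by
  refine Measure.ext_of_lintegral _ fun f hf => ?_
  rw [Measure.lintegral_bind gaussKernel.aemeasurable hf.aemeasurable, eq_comm, gaussMeasure,
    lintegral_withDensity_eq_lintegral_mul₀ (by fun_prop) hf.aemeasurable,
    lintegral_withDensity_eq_lintegral_mul₀ (by fun_prop) hf.lintegral_kernel.aemeasurable,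
    setLIntegral_Ioo_eq_tsum_gaussBranch, ← lintegral_tsum (by unfold gaussBranch; fun_prop)]
  refine setLIntegral_congr_fun measurableSet_Ioo fun x hx => ?_
  have hx0 : 0 ≤ x := hx.1.le
  simp only [Pi.mul_apply, lintegral_gaussKernel hx0, ← ENNReal.tsum_mul_left, ← mul_assoc]
  refine tsum_congr fun k => ?_
  rw [← ENNReal.ofReal_mul (by positivity), ← ENNReal.ofReal_mul (by positivity)]
  congr 2
  rw [gaussWeight, gaussBranch]
  have : 0 < log 2 := log_pos one_lt_two
  field_simp
  ring

theorem integral_gaussMeasure (f : ℝ → ℝ) :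
    ∫ x, f x ∂gaussMeasure = (log 2)⁻¹ * ∫ x in Set.Ioo 0 1, f x / (1 + x) := by
  rw [gaussMeasure, integral_withDensity_eq_integral_toReal_smul (by fun_prop)
    (ae_of_all _ fun _ => ENNReal.ofReal_lt_top), ← integral_const_mul]
  refine setIntegral_congr_fun measurableSet_Ioo fun x hx => ?_
  have hx0 : 0 < x := hx.1
  rw [ENNReal.toReal_ofReal (by positivity), smul_eq_mul]
  field_simp

theorem integral_Ioo_inv_one_add : ∫ x in Set.Ioo (0 : ℝ) 1, (1 + x)⁻¹ = log 2 := by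
  rw [← integral_Ioc_eq_integral_Ioo, ← intervalIntegral.integral_of_le zero_le_one,
    intervalIntegral.integral_comp_add_left (f := fun x => x⁻¹),
    integral_inv_of_pos (by norm_num) (by norm_num)]
  norm_num

instance : IsProbabilityMeasure gaussMeasure where
  measure_univ := by
    have hlog : 0 < log 2 := log_pos one_lt_two
    have hint : IntegrableOn (fun x : ℝ => 1 / (log 2 * (1 + x))) (Set.Ioo 0 1) := by
      refine (ContinuousOn.integrableOn_Icc fun x hx => ?_).mono_set Set.Ioo_subset_Icc_self
      have hx0 : log 2 * (1 + x) ≠ 0 := mul_ne_zero hlog.ne' (by linarith [hx.1])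
      fun_prop (disch := assumption)
    rw [gaussMeasure, withDensity_apply _ MeasurableSet.univ, Measure.restrict_univ,
      ← ofReal_integral_eq_lintegral_ofReal hint ((ae_restrict_iff' measurableSet_Ioo).2
        (ae_of_all _ fun x hx => by have := hx.1; positivity))]
    simp only [one_div, mul_inv, integral_const_mul, integral_Ioo_inv_one_add]
    rw [inv_mul_cancel₀ hlog.ne', ENNReal.ofReal_one]

theorem volume_inter_Ioo_le_gaussMeasure (s : Set ℝ) :
    volume (s ∩ Set.Ioo 0 1) ≤ ENNReal.ofReal (2 * log 2) * gaussMeasure s := by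
  have hlog : 0 < log 2 := log_pos one_lt_two
  have hle : volume.restrict (Set.Ioo (0 : ℝ) 1) ≤ ENNReal.ofReal (2 * log 2) • gaussMeasure := by
    rw [gaussMeasure, ← withDensity_smul _ (by fun_prop)]
    conv_lhs => rw [← withDensity_one (μ := volume.restrict (Set.Ioo (0 : ℝ) 1))]
    refine withDensity_mono ((ae_restrict_iff' measurableSet_Ioo).2 (ae_of_all _ fun x hx => ?_))
    have hx0 : 0 < x := hx.1
    rw [Pi.smul_apply, smul_eq_mul, ← ENNReal.ofReal_mul (by positivity), Pi.one_apply,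
      ENNReal.one_le_ofReal, mul_one_div, one_le_div (by positivity)]
    nlinarith [hx.2]
  exact (Measure.le_restrict_apply _ _).trans (hle s)

theorem ae_gaussMeasure_mem_Ioo : ∀ᵐ x ∂gaussMeasure, x ∈ Set.Ioo (0 : ℝ) 1 :=
  (withDensity_absolutelyContinuous _ _).ae_le (ae_restrict_mem measurableSet_Ioo)

theorem ae_gaussMeasure_mem_Icc : ∀ᵐ x ∂gaussMeasure, x ∈ Set.Icc (0 : ℝ) 1 :=
  ae_gaussMeasure_mem_Ioo.mono fun _ hx => Set.Ioo_subset_Icc_self hx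

/-! ### Contraction of the averaging operator -/

theorem abs_sub_le_of_lipschitzOnWith {f : ℝ → ℝ} {K : NNReal} {s : Set ℝ}
    (hf : LipschitzOnWith K f s) {a b : ℝ} (ha : a ∈ s) (hb : b ∈ s) :
    |f a - f b| ≤ K * |a - b| := by
  simpa only [dist_eq] using hf.dist_le_mul a ha b hb

theorem summable_mul_comp_of_lipschitzOnWith {ι : Type*} {f : ℝ → ℝ} {K : NNReal}
    (hf : LipschitzOnWith K f (Set.Icc 0 1)) {p u : ι → ℝ} (hp : Summable p)
    (hu : ∀ k, u k ∈ Set.Icc (0 : ℝ) 1) : Summable fun k => p k * f (u k) := by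
  refine Summable.of_norm_bounded (hp.abs.mul_right (|f 0| + K)) fun k => ?_
  rw [norm_mul, norm_eq_abs, norm_eq_abs]
  gcongr
  have h0 := abs_sub_le_of_lipschitzOnWith hf (hu k) (Set.left_mem_Icc.2 zero_le_one)
  rw [sub_zero, abs_of_nonneg (hu k).1] at h0
  nlinarith [abs_sub_abs_le_abs_sub (f (u k)) (f 0), (hu k).2, K.coe_nonneg]

-- Centring `f` at the midpoint of `[0, 1]` gains the factor `1 / 2` on the second sum.
theorem abs_tsum_mul_sub_tsum_mul_le {ι : Type*} {f : ℝ → ℝ} {K : NNReal}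
    (hf : LipschitzOnWith K f (Set.Icc 0 1)) {p q u v : ι → ℝ} {a : ℝ} (hp : HasSum p a)
    (hq : HasSum q a) (hp0 : ∀ k, 0 ≤ p k) (hu : ∀ k, u k ∈ Set.Icc (0 : ℝ) 1)
    (hv : ∀ k, v k ∈ Set.Icc (0 : ℝ) 1) :
    |∑' k, p k * f (u k) - ∑' k, q k * f (v k)| ≤
      K * (∑' k, p k * |u k - v k| + (∑' k, |p k - q k|) / 2) := by
  have hdecomp : HasSum (fun k => p k * (f (u k) - f (v k)) + (p k - q k) * (f (v k) - f (1 / 2)))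
      (∑' k, p k * f (u k) - ∑' k, q k * f (v k)) := by
    have h := ((summable_mul_comp_of_lipschitzOnWith hf hp.summable hu).hasSum.sub
      (summable_mul_comp_of_lipschitzOnWith hf hq.summable hv).hasSum).sub
      ((hp.sub hq).mul_right (f (1 / 2)))
    rw [sub_self, zero_mul, sub_zero] at h
    exact h.congr_fun fun k => by ring
  have hbound : HasSum (fun k => K * (p k * |u k - v k| + |p k - q k| / 2))
      (K * (∑' k, p k * |u k - v k| + (∑' k, |p k - q k|) / 2)) := by
    refine HasSum.mul_left _ (HasSum.add (Summable.hasSum ?_)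
      ((hp.summable.sub hq.summable).abs.hasSum.div_const 2))
    refine Summable.of_nonneg_of_le (fun k => mul_nonneg (hp0 k) (abs_nonneg _))
      (fun k => mul_le_of_le_one_right (hp0 k) ?_) hp.summable
    exact abs_le.2 ⟨by linarith [(hu k).1, (hv k).2], by linarith [(hu k).2, (hv k).1]⟩
  rw [← hdecomp.tsum_eq, ← norm_eq_abs]
  refine tsum_of_norm_bounded hbound fun k => ?_
  have hhalf : |v k - 1 / 2| ≤ 1 / 2 := abs_le.2 ⟨by linarith [(hv k).1], by linarith [(hv k).2]⟩
  calc ‖p k * (f (u k) - f (v k)) + (p k - q k) * (f (v k) - f (1 / 2))‖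
      ≤ p k * |f (u k) - f (v k)| + |p k - q k| * |f (v k) - f (1 / 2)| := by
        rw [norm_eq_abs]
        refine (abs_add_le _ _).trans_eq ?_
        rw [abs_mul, abs_mul, abs_of_nonneg (hp0 k)]
    _ ≤ p k * (K * |u k - v k|) + |p k - q k| * (K * (1 / 2)) := by
        gcongr
        · exact hp0 k
        · exact abs_sub_le_of_lipschitzOnWith hf (hu k) (hv k)
        · exact (abs_sub_le_of_lipschitzOnWith hf (hv k) (by norm_num)).trans (by gcongr)
    _ = K * (p k * |u k - v k| + |p k - q k| / 2) := by ring

section Contraction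

variable {x y : ℝ}

theorem abs_gaussBranch_sub_gaussBranch_le (k : ℕ) (hx : 0 ≤ x) (hy : 0 ≤ y) :
    |gaussBranch k x - gaussBranch k y| ≤ |x - y| / (k + 1) ^ 2 := by
  have hk : (0 : ℝ) < k + 1 := by positivity
  rw [gaussBranch, gaussBranch, inv_sub_inv (by positivity) (by positivity), abs_div,
    abs_of_pos (by positivity : 0 < ((k : ℝ) + 1 + x) * (k + 1 + y)), add_sub_add_left_eq_sub,
    abs_sub_comm, sq]
  exact div_le_div_of_nonneg_left (abs_nonneg _) (by positivity)
    (mul_le_mul (le_add_of_nonneg_right hx) (le_add_of_nonneg_right hy) hk.le (by positivity))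

-- The branch `k = 0` is `1`-Lipschitz and has weight at most `1 / 2`; the others are
-- `1 / 4`-Lipschitz.
theorem tsum_gaussWeight_mul_abs_gaussBranch_sub_le (hx : 0 ≤ x) (hy : 0 ≤ y) :
    ∑' k, gaussWeight k x * |gaussBranch k x - gaussBranch k y| ≤ 5 / 8 * |x - y| := by
  have hsum : HasSum (fun k => (gaussWeight k x + if k = 0 then 3 * gaussWeight 0 x else 0) *
      (|x - y| / 4)) ((1 + 3 * gaussWeight 0 x) * (|x - y| / 4)) :=
    ((hasSum_gaussWeight hx).add (hasSum_ite_eq 0 _)).mul_right _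
  have hzero : gaussWeight 0 x ≤ 1 / 2 := by
    rw [gaussWeight_zero hx]
    gcongr
    linarith
  calc ∑' k, gaussWeight k x * |gaussBranch k x - gaussBranch k y|
      ≤ (1 + 3 * gaussWeight 0 x) * (|x - y| / 4) := by
        refine (le_abs_self _).trans (tsum_of_norm_bounded (E := ℝ) hsum fun k => ?_)
        rw [norm_mul, norm_eq_abs, abs_of_nonneg (gaussWeight_nonneg k hx), norm_eq_abs, abs_abs]
        have hbranch := mul_le_mul_of_nonneg_left (abs_gaussBranch_sub_gaussBranch_le k hx hy)
          (gaussWeight_nonneg k hx)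
        rcases k with _ | k
        · refine hbranch.trans_eq ?_
          norm_num
          ring
        · refine hbranch.trans ?_
          rw [if_neg k.succ_ne_zero, add_zero]
          have hfour : (4 : ℝ) ≤ ((k + 1 : ℕ) + 1) ^ 2 := by
            push_cast
            nlinarith [k.cast_nonneg (α := ℝ)]
          gcongr
          exact gaussWeight_nonneg _ hx
    _ ≤ 5 / 8 * |x - y| := by nlinarith [abs_nonneg (x - y)]

theorem gaussWeight_le_gaussWeight {k : ℕ} (hk : 2 ≤ k) (hx : 0 ≤ x) (hxy : x ≤ y) (hy : y ≤ 1) :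
    gaussWeight k x ≤ gaussWeight k y := by
  have hk2 : (2 : ℝ) ≤ k := by exact_mod_cast hk
  have hy0 : 0 ≤ y := hx.trans hxy
  have hprod : (1 + x) * (1 + y) ≤ k * (k + 1) := by nlinarith
  rw [gaussWeight, gaussWeight, div_le_div_iff₀ (by positivity) (by positivity)]
  linarith [mul_le_mul_of_nonneg_left hprod (sub_nonneg.2 hxy)]

-- The weights sum to `1` and are increasing in `x` for `k ≥ 2`, so the first two weights control
-- the whole sum.
theorem tsum_abs_gaussWeight_sub_le (hx : x ∈ Set.Icc (0 : ℝ) 1) (hy : y ∈ Set.Icc (0 : ℝ) 1) :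
    ∑' k, |gaussWeight k x - gaussWeight k y| ≤ |x - y| / 2 := by
  wlog hxy : x ≤ y generalizing x y
  · simpa only [abs_sub_comm] using this hy hx (le_of_not_ge hxy)
  have hdiff := (hasSum_gaussWeight hx.1).sub (hasSum_gaussWeight hy.1)
  have htail := hdiff.summable.sum_add_tsum_nat_add 2
  have htail' := hdiff.summable.abs.sum_add_tsum_nat_add 2
  have hneg (k : ℕ) : |gaussWeight (k + 2) x - gaussWeight (k + 2) y| =
      -(gaussWeight (k + 2) x - gaussWeight (k + 2) y) :=
    abs_of_nonpos (sub_nonpos.2 (gaussWeight_le_gaussWeight (by lia) hx.1 hxy hy.2))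
  rw [hdiff.tsum_eq] at htail
  simp only [hneg, tsum_neg, Finset.sum_range_succ, Finset.sum_range_zero] at htail htail'
  have hx0 : 0 ≤ x := hx.1
  have hy0 : 0 ≤ y := hy.1
  have hd : 0 ≤ y - x := sub_nonneg.2 hxy
  have hzero : gaussWeight 0 x - gaussWeight 0 y = (y - x) / ((2 + x) * (2 + y)) := by
    rw [gaussWeight_zero hx0, gaussWeight_zero hy0]
    field_simp
    ring
  have hone : gaussWeight 0 x - gaussWeight 0 y + (gaussWeight 1 x - gaussWeight 1 y) =
      2 * (y - x) / ((3 + x) * (3 + y)) := by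
    simp only [gaussWeight, Nat.cast_zero, Nat.cast_one]
    field_simp
    ring
  have hzero_nonneg : 0 ≤ gaussWeight 0 x - gaussWeight 0 y := hzero ▸ by positivity
  have hzero_le : gaussWeight 0 x - gaussWeight 0 y ≤ (y - x) / 4 :=
    hzero.trans_le (div_le_div_of_nonneg_left hd (by positivity) (by nlinarith))
  have hone_le : gaussWeight 0 x - gaussWeight 0 y + (gaussWeight 1 x - gaussWeight 1 y) ≤
      (y - x) / 4 := by
    rw [hone, div_le_div_iff₀ (by positivity) (by positivity)]
    nlinarith [mul_nonneg hx0 hy0]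
  rw [abs_of_nonneg hzero_nonneg] at htail'
  rw [abs_sub_comm x y, abs_of_nonneg hd]
  rcases abs_cases (gaussWeight 1 x - gaussWeight 1 y) with ⟨h, -⟩ | ⟨h, -⟩ <;> linarith

/-- The averaging operator `f ↦ ∑ₖ pₖ(x) f(1 / (k + 1 + x))` of the Gauss kernel, i.e. the transfer
operator of the Gauss map normalized to fix constants. -/
noncomputable def gaussAverage (f : ℝ → ℝ) (x : ℝ) : ℝ := ∫ z, f z ∂gaussKernel x

theorem lipschitzOnWith_gaussAverage {f : ℝ → ℝ} {K : NNReal}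
    (hf : LipschitzOnWith K f (Set.Icc 0 1)) :
    LipschitzOnWith (7 / 8 * K) (gaussAverage f) (Set.Icc 0 1) := by
  refine LipschitzOnWith.of_dist_le_mul fun x hx y hy => ?_
  rw [dist_eq, dist_eq, gaussAverage, gaussAverage, integral_gaussKernel hx.1,
    integral_gaussKernel hy.1]
  calc _ ≤ K * (∑' k, gaussWeight k x * |gaussBranch k x - gaussBranch k y| +
        (∑' k, |gaussWeight k x - gaussWeight k y|) / 2) :=
        abs_tsum_mul_sub_tsum_mul_le hf (hasSum_gaussWeight hx.1) (hasSum_gaussWeight hy.1)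
          (fun k => gaussWeight_nonneg k hx.1) (fun k => gaussBranch_mem_Icc k hx.1)
          (fun k => gaussBranch_mem_Icc k hy.1)
    _ ≤ K * (5 / 8 * |x - y| + |x - y| / 2 / 2) := by
        gcongr
        · exact tsum_gaussWeight_mul_abs_gaussBranch_sub_le hx.1 hy.1
        · exact tsum_abs_gaussWeight_sub_le hx hy
    _ = ((7 / 8 * K : NNReal) : ℝ) * |x - y| := by
        push_cast
        ring

end Contraction

/-! ### The logarithm under the Gauss kernel -/

section Log

variable {x y : ℝ}

theorem summable_sqrt_div_mul :
    Summable fun k : ℕ => √((k : ℝ) + 2) / (((k : ℝ) + 1) * (k + 2)) := by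
  have hsum : Summable fun k : ℕ => 1 / ((k + 1 : ℕ) : ℝ) ^ (3 / 2 : ℝ) :=
    (summable_nat_add_iff 1).2 (summable_one_div_nat_rpow.2 (by norm_num))
  refine Summable.of_nonneg_of_le (fun k => by positivity) (fun k => ?_) hsum
  have hk : (0 : ℝ) < k + 1 := by positivity
  have hrpow : ((k + 1 : ℕ) : ℝ) ^ (3 / 2 : ℝ) = (k + 1) * √(k + 1) := by
    rw [Nat.cast_add_one, sqrt_eq_rpow, ← rpow_one_add' hk.le (by norm_num)]
    norm_num
  calc √((k : ℝ) + 2) / (((k : ℝ) + 1) * (k + 2)) = 1 / ((k + 1) * √(k + 2)) := by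
        rw [div_eq_div_iff (by positivity) (by positivity), one_mul, mul_left_comm,
          mul_self_sqrt (by positivity)]
    _ ≤ 1 / ((k + 1 : ℕ) : ℝ) ^ (3 / 2 : ℝ) := by
        rw [hrpow]
        gcongr
        norm_num

theorem add_one_mul_add_two_le (k : ℕ) (hx : 0 ≤ x) :
    ((k : ℝ) + 1) * (k + 2) ≤ (k + 1 + x) * (k + 2 + x) :=
  mul_le_mul (by linarith) (by linarith) (by positivity) (by positivity)

theorem gaussWeight_le (k : ℕ) (hx : x ∈ Set.Icc (0 : ℝ) 1) :
    gaussWeight k x ≤ 2 / ((k + 1) * (k + 2)) :=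
  div_le_div₀ zero_le_two (by linarith [hx.2]) (by positivity) (add_one_mul_add_two_le k hx.1)

theorem abs_gaussWeight_sub_le (k : ℕ) (hx : x ∈ Set.Icc (0 : ℝ) 1) (hy : y ∈ Set.Icc (0 : ℝ) 1) :
    |gaussWeight k x - gaussWeight k y| ≤ 2 / ((k + 1) * (k + 2)) * |x - y| := by
  obtain ⟨hx0, hx1⟩ := hx
  obtain ⟨hy0, hy1⟩ := hy
  have hdiff : gaussWeight k x - gaussWeight k y = (k * (k + 1) - (1 + x) * (1 + y)) /
      ((k + 1 + x) * (k + 2 + x) * ((k + 1 + y) * (k + 2 + y))) * (x - y) := by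
    unfold gaussWeight
    field_simp
    ring
  have hnum : |(k : ℝ) * (k + 1) - (1 + x) * (1 + y)| ≤ 2 * ((k + 1) * (k + 2)) := by
    rw [abs_le]
    constructor <;> nlinarith [k.cast_nonneg (α := ℝ), mul_nonneg hx0 hy0, mul_le_one₀ hx1 hy0 hy1]
  rw [hdiff, abs_mul, abs_div, abs_of_pos (a := (_ : ℝ) * _) (by positivity)]
  refine mul_le_mul_of_nonneg_right ?_ (abs_nonneg _)
  calc _ ≤ 2 * (((k : ℝ) + 1) * (k + 2)) / ((k + 1) * (k + 2) * ((k + 1) * (k + 2))) :=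
        div_le_div₀ (by positivity) hnum (by positivity) (mul_le_mul (add_one_mul_add_two_le k hx0)
          (add_one_mul_add_two_le k hy0) (by positivity) (by positivity))
    _ = 2 / ((k + 1) * (k + 2)) := by field_simp

theorem neg_log_gaussBranch (k : ℕ) (x : ℝ) : -log (gaussBranch k x) = log (k + 1 + x) := by
  rw [gaussBranch, log_inv, neg_neg]

theorem log_succ_add_nonneg (k : ℕ) (hx : 0 ≤ x) : 0 ≤ log (k + 1 + x) :=
  log_nonneg (by linarith [k.cast_nonneg (α := ℝ)])

theorem log_succ_add_le_sqrt (k : ℕ) (hx : x ∈ Set.Icc (0 : ℝ) 1) :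
    log (k + 1 + x) ≤ 2 * √(k + 2) := by
  have hx0 : 0 ≤ x := hx.1
  have hsqrt := log_le_sub_one_of_pos (sqrt_pos.2 (by positivity : (0 : ℝ) < k + 2))
  rw [log_sqrt (by positivity)] at hsqrt
  have hmono : log (k + 1 + x) ≤ log (k + 2) :=
    log_le_log (by positivity) (by linarith [hx.2])
  linarith

theorem abs_log_succ_add_sub_le (k : ℕ) (hx : 0 ≤ x) (hy : 0 ≤ y) :
    |log (k + 1 + x) - log (k + 1 + y)| ≤ |x - y| := by
  wlog hxy : y ≤ x generalizing x y
  · simpa only [abs_sub_comm] using this hy hx (le_of_not_ge hxy)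
  have hy1 : (1 : ℝ) ≤ k + 1 + y := by linarith [k.cast_nonneg (α := ℝ)]
  rw [abs_of_nonneg (sub_nonneg.2 (log_le_log (by linarith) (by linarith))),
    abs_of_nonneg (sub_nonneg.2 hxy), ← log_div (by positivity) (by positivity)]
  calc log ((k + 1 + x) / (k + 1 + y)) ≤ (k + 1 + x) / (k + 1 + y) - 1 :=
        log_le_sub_one_of_pos (by positivity)
    _ = (x - y) / (k + 1 + y) := by
        field_simp
        ring
    _ ≤ x - y := div_le_self (sub_nonneg.2 hxy) hy1

-- `2 * (1 / 4)` is the factor `2 * s` of `exists_measure_birkhoffSum_deviation_le` at `s = 1 / 4`.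
theorem exp_half_abs_neg_log_gaussBranch (k : ℕ) (hx : 0 ≤ x) :
    exp (2 * (1 / 4) * |-log (gaussBranch k x)|) = √(k + 1 + x) := by
  rw [neg_log_gaussBranch, abs_of_nonneg (log_succ_add_nonneg k hx), sqrt_eq_rpow,
    rpow_def_of_pos (by positivity)]
  ring_nf

theorem gaussWeight_mul_sqrt_le (k : ℕ) (hx : x ∈ Set.Icc (0 : ℝ) 1) :
    gaussWeight k x * √(k + 1 + x) ≤ 2 * (√(k + 2) / ((k + 1) * (k + 2))) := by
  calc gaussWeight k x * √(k + 1 + x) ≤ 2 / ((k + 1) * (k + 2)) * √(k + 2) :=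
        mul_le_mul (gaussWeight_le k hx) (sqrt_le_sqrt (by linarith [hx.2])) (sqrt_nonneg _)
          (by positivity)
    _ = 2 * (√(k + 2) / ((k + 1) * (k + 2))) := by ring

theorem summable_gaussWeight_mul_sqrt (hx : x ∈ Set.Icc (0 : ℝ) 1) :
    Summable fun k : ℕ => gaussWeight k x * √(k + 1 + x) :=
  Summable.of_nonneg_of_le (fun k => mul_nonneg (gaussWeight_nonneg k hx.1) (sqrt_nonneg _))
    (fun k => gaussWeight_mul_sqrt_le k hx) (summable_sqrt_div_mul.mul_left 2)

theorem integrable_exp_half_abs_neg_log_gaussKernel (hx : x ∈ Set.Icc (0 : ℝ) 1) :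
    Integrable (fun z => exp (2 * (1 / 4) * |-log z|)) (gaussKernel x) := by
  rw [integrable_gaussKernel_iff hx.1]
  simpa only [exp_half_abs_neg_log_gaussBranch _ hx.1, abs_of_nonneg (sqrt_nonneg _)] using
    summable_gaussWeight_mul_sqrt hx

theorem integral_exp_half_abs_neg_log_gaussKernel_le (hx : x ∈ Set.Icc (0 : ℝ) 1) :
    ∫ z, exp (2 * (1 / 4) * |-log z|) ∂gaussKernel x ≤
      ∑' k : ℕ, 2 * (√((k : ℝ) + 2) / ((k + 1) * (k + 2))) := by
  rw [integral_gaussKernel hx.1]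
  simp only [exp_half_abs_neg_log_gaussBranch _ hx.1]
  exact (summable_gaussWeight_mul_sqrt hx).tsum_le_tsum (fun k => gaussWeight_mul_sqrt_le k hx)
    (summable_sqrt_div_mul.mul_left 2)

theorem integrable_neg_log_gaussKernel (hx : x ∈ Set.Icc (0 : ℝ) 1) :
    Integrable (fun z => -log z) (gaussKernel x) :=
  integrable_of_integrable_exp_mul_abs (s := 2 * (1 / 4)) (by norm_num)
    measurable_log.neg.aestronglyMeasurable (integrable_exp_half_abs_neg_log_gaussKernel hx)

theorem abs_gaussWeight_mul_log_sub_le (k : ℕ) (hx : x ∈ Set.Icc (0 : ℝ) 1)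
    (hy : y ∈ Set.Icc (0 : ℝ) 1) :
    |gaussWeight k x * log (k + 1 + x) - gaussWeight k y * log (k + 1 + y)| ≤
      6 * (√(k + 2) / ((k + 1) * (k + 2))) * |x - y| := by
  have hone : 1 ≤ √((k : ℝ) + 2) := one_le_sqrt.2 (by linarith [k.cast_nonneg (α := ℝ)])
  calc _ = |gaussWeight k x * (log (k + 1 + x) - log (k + 1 + y)) +
        (gaussWeight k x - gaussWeight k y) * log (k + 1 + y)| := by
        congr 1
        ring
    _ ≤ gaussWeight k x * |log (k + 1 + x) - log (k + 1 + y)| +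
        |gaussWeight k x - gaussWeight k y| * log (k + 1 + y) := by
        refine (abs_add_le _ _).trans_eq ?_
        rw [abs_mul, abs_mul, abs_of_nonneg (gaussWeight_nonneg k hx.1),
          abs_of_nonneg (log_succ_add_nonneg k hy.1)]
    _ ≤ 2 / ((k + 1) * (k + 2)) * |x - y| + 2 / ((k + 1) * (k + 2)) * |x - y| * (2 * √(k + 2)) :=
        add_le_add (mul_le_mul (gaussWeight_le k hx) (abs_log_succ_add_sub_le k hx.1 hy.1)
          (abs_nonneg _) (by positivity)) (mul_le_mul (abs_gaussWeight_sub_le k hx hy)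
          (log_succ_add_le_sqrt k hy) (log_succ_add_nonneg k hy.1) (by positivity))
    _ = 2 / ((k + 1) * (k + 2)) * |x - y| * (1 + 2 * √(k + 2)) := by ring
    _ ≤ 2 / ((k + 1) * (k + 2)) * |x - y| * (3 * √(k + 2)) := by
        gcongr
        linarith
    _ = 6 * (√(k + 2) / ((k + 1) * (k + 2))) * |x - y| := by ring

theorem exists_lipschitzOnWith_gaussAverage_neg_log :
    ∃ K, LipschitzOnWith K (gaussAverage fun z => -log z) (Set.Icc 0 1) := by
  refine ⟨_, LipschitzOnWith.of_dist_le' (K := 6 * ∑' k : ℕ, √((k : ℝ) + 2) / ((k + 1) * (k + 2)))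
    fun x hx y hy => ?_⟩
  have hsum {z : ℝ} (hz : z ∈ Set.Icc (0 : ℝ) 1) :
      Summable fun k => gaussWeight k z * log (k + 1 + z) := by
    simpa only [neg_log_gaussBranch, abs_of_nonneg (log_succ_add_nonneg _ hz.1)] using
      (integrable_gaussKernel_iff hz.1).1 (integrable_neg_log_gaussKernel hz)
  simp only [dist_eq, gaussAverage, integral_gaussKernel hx.1, integral_gaussKernel hy.1,
    neg_log_gaussBranch]
  rw [← (hsum hx).tsum_sub (hsum hy), ← norm_eq_abs]
  exact tsum_of_norm_bounded ((summable_sqrt_div_mul.hasSum.mul_left 6).mul_right |x - y|)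
    fun k => abs_gaussWeight_mul_log_sub_le k hx hy

end Log

/-! ### The mean of the logarithm -/

theorem integrableOn_pow_mul_neg_log (n : ℕ) :
    IntegrableOn (fun x : ℝ => x ^ n * -log x) (Set.Ioo 0 1) := by
  have hlog : IntervalIntegrable log volume 0 1 := intervalIntegral.intervalIntegrable_log'
  exact (intervalIntegrable_iff_integrableOn_Ioo_of_le zero_le_one).1
    (hlog.neg.continuousOn_mul (by fun_prop))

theorem setIntegral_pow_mul_neg_log (n : ℕ) :
    ∫ x in Set.Ioo (0 : ℝ) 1, x ^ n * -log x = 1 / ((n : ℝ) + 1) ^ 2 := by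
  have hderiv (x : ℝ) (hx : x ∈ Set.Ioo (0 : ℝ) 1) : HasDerivAt
      (fun x => x ^ (n + 1) / ((n : ℝ) + 1) ^ 2 - x ^ n * (x * log x) / (n + 1))
      (x ^ n * -log x) x := by
    have hx0 : x ≠ 0 := hx.1.ne'
    have h := ((hasDerivAt_pow (n + 1) x).div_const (((n : ℝ) + 1) ^ 2)).fun_sub
      (((hasDerivAt_pow (n + 1) x).fun_mul (hasDerivAt_log hx0)).div_const ((n : ℝ) + 1))
    simp only [← mul_assoc, ← pow_succ]
    refine h.congr_deriv ?_
    push_cast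
    field_simp
    ring
  have hcont : ContinuousOn
      (fun x => x ^ (n + 1) / ((n : ℝ) + 1) ^ 2 - x ^ n * (x * log x) / (n + 1))
      (Set.Icc 0 1) := by
    have := continuous_mul_log
    fun_prop
  rw [← integral_Ioc_eq_integral_Ioo, ← intervalIntegral.integral_of_le zero_le_one,
    intervalIntegral.integral_eq_sub_of_hasDerivAt_of_le zero_le_one hcont hderiv
      ((intervalIntegrable_iff_integrableOn_Ioo_of_le zero_le_one).2
        (integrableOn_pow_mul_neg_log n))]
  simp

theorem hasSum_one_div_succ_sq : HasSum (fun n : ℕ => 1 / ((n : ℝ) + 1) ^ 2) (π ^ 2 / 6) := by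
  have h := (hasSum_nat_add_iff' 1).2 hasSum_zeta_two
  simpa using h

theorem hasSum_neg_one_pow_div_succ_sq :
    HasSum (fun n : ℕ => (-1) ^ n * (1 / ((n : ℝ) + 1) ^ 2)) (π ^ 2 / 12) := by
  have hodd : HasSum (fun n : ℕ => (1 - (-1) ^ n) * (1 / ((n : ℝ) + 1) ^ 2))
      (0 + π ^ 2 / 6 / 2) := by
    refine HasSum.even_add_odd (hasSum_zero.congr_fun fun k => by simp)
      ((hasSum_one_div_succ_sq.div_const 2).congr_fun fun k => ?_)
    rw [pow_succ, pow_mul, neg_one_sq, one_pow]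
    push_cast
    field_simp
    ring
  have hdiff := hasSum_one_div_succ_sq.sub hodd
  rw [show π ^ 2 / 6 - (0 + π ^ 2 / 6 / 2) = π ^ 2 / 12 by ring] at hdiff
  exact hdiff.congr_fun fun n => by ring

theorem integral_neg_log_gaussMeasure :
    ∫ x, -log x ∂gaussMeasure = π ^ 2 / (12 * log 2) := by
  have hterm (n : ℕ) : ∫ x in Set.Ioo (0 : ℝ) 1, (-1) ^ n * (x ^ n * -log x) =
      (-1) ^ n * (1 / ((n : ℝ) + 1) ^ 2) := by
    rw [integral_const_mul, setIntegral_pow_mul_neg_log]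
  have hnorm (n : ℕ) : ∫ x in Set.Ioo (0 : ℝ) 1, ‖(-1) ^ n * (x ^ n * -log x)‖ =
      1 / ((n : ℝ) + 1) ^ 2 := by
    rw [← setIntegral_pow_mul_neg_log]
    refine setIntegral_congr_fun measurableSet_Ioo fun x hx => ?_
    simp only [norm_mul, norm_pow, norm_neg, norm_one, one_pow, one_mul]
    rw [norm_of_nonneg hx.1.le, norm_of_nonpos (log_nonpos hx.1.le hx.2.le)]
  have hsum := hasSum_integral_of_summable_integral_norm
    (fun n => (integrableOn_pow_mul_neg_log n).const_mul ((-1) ^ n))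
    (by simpa only [hnorm] using hasSum_one_div_succ_sq.summable)
  simp only [hterm] at hsum
  have hgeom (x : ℝ) (hx : x ∈ Set.Ioo (0 : ℝ) 1) :
      -log x / (1 + x) = ∑' n : ℕ, (-1) ^ n * (x ^ n * -log x) := by
    simp only [← mul_assoc, ← mul_pow, tsum_mul_right]
    rw [tsum_geometric_of_abs_lt_one (by simpa [abs_of_pos hx.1] using hx.2)]
    ring
  rw [integral_gaussMeasure, setIntegral_congr_fun measurableSet_Ioo hgeom,
    hsum.unique hasSum_neg_one_pow_div_succ_sq]
  field_simp

/-! ### The Poisson equation -/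

theorem integrable_of_continuousOn_isCompact {X : Type*} [TopologicalSpace X] [MeasurableSpace X]
    {ν : Measure X} [IsFiniteMeasure ν] {f : X → ℝ} {s : Set X} (hf : Measurable f)
    (hs : IsCompact s) (hcont : ContinuousOn f s) (hν : ∀ᵐ z ∂ν, z ∈ s) : Integrable f ν := by
  obtain ⟨C, hC⟩ := hs.exists_bound_of_continuousOn hcont
  exact Integrable.of_bound hf.aestronglyMeasurable C (hν.mono hC)

section Poisson

variable {f : ℝ → ℝ} {K : NNReal}

theorem measurable_gaussAverage (hf : Measurable f) : Measurable (gaussAverage f) :=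
  hf.stronglyMeasurable.integral_kernel.measurable

theorem integral_gaussAverage (hf : Integrable f gaussMeasure) :
    ∫ x, gaussAverage f x ∂gaussMeasure = ∫ x, f x ∂gaussMeasure := by
  have hcomp : (gaussKernel ∘ₖ Kernel.const Unit gaussMeasure) () = gaussMeasure := by
    rw [← Measure.comp_eq_comp_const_apply, invariant_gaussKernel_gaussMeasure.def]
  have hint := Kernel.integral_comp (hcomp.symm ▸ hf)
  rwa [hcomp, Kernel.const_apply, eq_comm] at hint

theorem integrable_gaussMeasure_of_lipschitzOnWith (hf : Measurable f)
    (hLip : LipschitzOnWith K f (Set.Icc 0 1)) : Integrable f gaussMeasure :=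
  integrable_of_continuousOn_isCompact hf isCompact_Icc hLip.continuousOn ae_gaussMeasure_mem_Icc

theorem abs_sub_integral_gaussMeasure_le (hf : Measurable f)
    (hLip : LipschitzOnWith K f (Set.Icc 0 1)) {x : ℝ} (hx : x ∈ Set.Icc (0 : ℝ) 1) :
    |f x - ∫ z, f z ∂gaussMeasure| ≤ K := by
  have hint := integrable_gaussMeasure_of_lipschitzOnWith hf hLip
  calc |f x - ∫ z, f z ∂gaussMeasure| = ‖∫ z, (f x - f z) ∂gaussMeasure‖ := by
        rw [integral_sub (integrable_const _) hint, integral_const, probReal_univ, one_smul,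
          norm_eq_abs]
    _ ≤ K * gaussMeasure.real Set.univ := by
        refine norm_integral_le_of_norm_le_const (ae_gaussMeasure_mem_Icc.mono fun z hz => ?_)
        refine (abs_sub_le_of_lipschitzOnWith hLip hx hz).trans (mul_le_of_le_one_right K.2 ?_)
        exact abs_le.2 ⟨by linarith [hx.1, hz.2], by linarith [hx.2, hz.1]⟩
    _ = K := by rw [probReal_univ, mul_one]

theorem measurable_iterate_gaussAverage (hf : Measurable f) (m : ℕ) :
    Measurable (gaussAverage^[m] f) :=
  Function.Iterate.rec Measurable hf (fun _ => measurable_gaussAverage) m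

theorem lipschitzOnWith_iterate_gaussAverage (hLip : LipschitzOnWith K f (Set.Icc 0 1)) (m : ℕ) :
    LipschitzOnWith ((7 / 8) ^ m * K) (gaussAverage^[m] f) (Set.Icc 0 1) := by
  induction m with
  | zero => simpa using hLip
  | succ m ih =>
    rw [Function.iterate_succ_apply', pow_succ', mul_assoc]
    exact lipschitzOnWith_gaussAverage ih

theorem integral_iterate_gaussAverage (hf : Measurable f)
    (hLip : LipschitzOnWith K f (Set.Icc 0 1)) (m : ℕ) :
    ∫ x, gaussAverage^[m] f x ∂gaussMeasure = ∫ x, f x ∂gaussMeasure := by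
  induction m with
  | zero => rfl
  | succ m ih =>
    rw [Function.iterate_succ_apply', integral_gaussAverage, ih]
    exact integrable_gaussMeasure_of_lipschitzOnWith (measurable_iterate_gaussAverage hf m)
      (lipschitzOnWith_iterate_gaussAverage hLip m)

theorem integrable_gaussKernel_of_lipschitzOnWith (hf : Measurable f)
    (hLip : LipschitzOnWith K f (Set.Icc 0 1)) {x : ℝ} (hx : 0 ≤ x) :
    Integrable f (gaussKernel x) :=
  integrable_of_continuousOn_isCompact hf isCompact_Icc hLip.continuousOn
    (ae_gaussKernel_of_forall hx fun k => gaussBranch_mem_Icc k hx)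

theorem exists_iterate_gaussAverage_eq_add (hf : Measurable f)
    (hLip : LipschitzOnWith K f (Set.Icc 0 1)) (m : ℕ) :
    ∃ v, Measurable v ∧ (∃ C, LipschitzOnWith C v (Set.Icc 0 1)) ∧
      ∀ x, 0 ≤ x → gaussAverage^[m] f x = f x + gaussAverage v x - v x := by
  induction m with
  | zero => exact ⟨0, measurable_zero, ⟨0, LipschitzWith.const' 0 |>.lipschitzOnWith⟩,
      fun x _ => by simp [gaussAverage]⟩
  | succ m ih =>
    obtain ⟨v, hv, ⟨C, hC⟩, hm⟩ := ih
    have hmeas := measurable_iterate_gaussAverage hf m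
    have hlip := lipschitzOnWith_iterate_gaussAverage hLip m
    refine ⟨v + gaussAverage^[m] f, hv.add hmeas, ⟨_, hC.add hlip⟩, fun x hx => ?_⟩
    have hadd : gaussAverage (v + gaussAverage^[m] f) x =
        gaussAverage v x + gaussAverage (gaussAverage^[m] f) x :=
      integral_add (integrable_gaussKernel_of_lipschitzOnWith hv hC hx)
        (integrable_gaussKernel_of_lipschitzOnWith hmeas hlip hx)
    rw [Function.iterate_succ_apply', hadd, Pi.add_apply, hm x hx]
    ring

theorem exists_abs_integral_gaussKernel_coboundary_le (hf : Measurable f)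
    (hint : Integrable f gaussMeasure)
    (hκ : ∀ x ∈ Set.Icc (0 : ℝ) 1, Integrable f (gaussKernel x))
    (hLip : LipschitzOnWith K (gaussAverage f) (Set.Icc 0 1)) {ε : ℝ} (hε : 0 < ε) :
    ∃ v, Measurable v ∧ (∃ C, LipschitzOnWith C v (Set.Icc 0 1)) ∧ ∀ x ∈ Set.Icc (0 : ℝ) 1,
      |∫ z, f z + v z - v x - ∫ y, f y ∂gaussMeasure ∂gaussKernel x| ≤ ε := by
  obtain ⟨m, hm⟩ : ∃ m : ℕ, (7 / 8 : ℝ) ^ m * K < ε := by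
    have hlim := (tendsto_pow_atTop_nhds_zero_of_lt_one (r := (7 / 8 : ℝ)) (by norm_num)
      (by norm_num)).mul_const (K : ℝ)
    rw [zero_mul] at hlim
    exact (hlim.eventually_lt_const hε).exists
  have hmeas := measurable_gaussAverage hf
  obtain ⟨v, hv, ⟨C, hC⟩, hiter⟩ := exists_iterate_gaussAverage_eq_add hmeas hLip m
  refine ⟨v, hv, ⟨C, hC⟩, fun x hx => ?_⟩
  have hvint := integrable_gaussKernel_of_lipschitzOnWith hv hC hx.1
  have hadd : Integrable (fun z => f z + v z) (gaussKernel x) := (hκ x hx).add hvint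
  have hsub : Integrable (fun z => f z + v z - v x) (gaussKernel x) :=
    hadd.sub (integrable_const _)
  have hmean : ∫ y, gaussAverage^[m] (gaussAverage f) y ∂gaussMeasure = ∫ y, f y ∂gaussMeasure := by
    rw [integral_iterate_gaussAverage hmeas hLip, integral_gaussAverage hint]
  have hsplit : ∫ z, f z + v z - v x - ∫ y, f y ∂gaussMeasure ∂gaussKernel x =
      gaussAverage^[m] (gaussAverage f) x -
        ∫ y, gaussAverage^[m] (gaussAverage f) y ∂gaussMeasure := by
    rw [hiter x hx.1, hmean, integral_sub hsub (integrable_const _),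
      integral_sub hadd (integrable_const _),
      integral_add (hκ x hx) hvint, integral_const, integral_const, probReal_univ, one_smul,
      one_smul]
    rfl
  rw [hsplit]
  refine (abs_sub_integral_gaussMeasure_le (measurable_iterate_gaussAverage hmeas m)
    (lipschitzOnWith_iterate_gaussAverage hLip m) hx).trans ?_
  push_cast
  exact hm.le

end Poisson

/-! ### Denominators and Birkhoff sums -/

theorem measurable_gaussMap : Measurable gaussMap := by
  unfold gaussMap
  fun_prop

theorem exists_gaussMeasure_birkhoffSum_neg_log_deviation_le {δ : ℝ} (hδ : 0 < δ) (r : ℝ) :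
    ∃ B > 0, ∃ a > 0, ∀ n : ℕ,
      gaussMeasure {x | n * δ - r ≤
        |birkhoffSum gaussMap (fun z => -log z) n x - n * (π ^ 2 / (12 * log 2))|} ≤
        ENNReal.ofReal (B * exp (-a * n)) := by
  have hmeas : Measurable fun z => -log z := measurable_log.neg
  have hint : Integrable (fun z => -log z) gaussMeasure :=
    Integrable.of_integral_ne_zero (by rw [integral_neg_log_gaussMeasure]; positivity)
  obtain ⟨K, hK⟩ := exists_lipschitzOnWith_gaussAverage_neg_log
  refine exists_measure_birkhoffSum_deviation_le invariant_gaussKernel_gaussMeasure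
    measurable_gaussMap
    (ae_gaussMeasure_mem_Ioo.mono fun x hx => ae_gaussKernel_of_forall hx.1.le fun k =>
      gaussMap_gaussBranch k (Set.Ioo_subset_Ico_self hx))
    hmeas (s := 1 / 4) (by norm_num)
    (ae_gaussMeasure_mem_Icc.mono fun x hx => integrable_exp_half_abs_neg_log_gaussKernel hx)
    (ae_gaussMeasure_mem_Icc.mono fun x hx => integral_exp_half_abs_neg_log_gaussKernel_le hx)
    (fun ε hε => ?_) hδ r
  obtain ⟨v, hv, ⟨C, hC⟩, hvε⟩ := exists_abs_integral_gaussKernel_coboundary_le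
    hmeas hint (fun x hx => integrable_neg_log_gaussKernel hx) hK hε
  obtain ⟨V, hV⟩ := isCompact_Icc.exists_bound_of_continuousOn hC.continuousOn
  rw [integral_neg_log_gaussMeasure] at hvε
  exact ⟨v, hv, ⟨V, ae_gaussMeasure_mem_Icc.mono hV⟩, ae_gaussMeasure_mem_Icc.mono hvε⟩

section Denominators

variable {x : ℝ}

theorem irrational_gaussMap (hirr : Irrational x) : Irrational (gaussMap x) :=
  (irrational_inv_iff.2 hirr).sub_intCast _

theorem irrational_iterate_gaussMap (hirr : Irrational x) (n : ℕ) :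
    Irrational (gaussMap^[n] x) :=
  Function.Iterate.rec Irrational hirr (fun _ => irrational_gaussMap) n

theorem iterate_gaussMap_mem_Ioo (hx : x ∈ Set.Ico (0 : ℝ) 1) (hirr : Irrational x) (n : ℕ) :
    gaussMap^[n] x ∈ Set.Ioo (0 : ℝ) 1 := by
  have hIco : gaussMap^[n] x ∈ Set.Ico (0 : ℝ) 1 := by
    cases n with
    | zero => exact hx
    | succ n =>
      rw [Function.iterate_succ_apply']
      exact ⟨Int.fract_nonneg _, Int.fract_lt_one _⟩
  exact ⟨hIco.1.lt_of_ne' (irrational_iterate_gaussMap hirr n).ne_zero, hIco.2⟩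

theorem one_le_pq_succ (hx : x ∈ Set.Ico (0 : ℝ) 1) (hirr : Irrational x) (n : ℕ) :
    1 ≤ pq x (n + 1) := by
  obtain ⟨h0, h1⟩ := iterate_gaussMap_mem_Ioo hx hirr n
  have hfloor : 1 ≤ ⌊(gaussMap^[n] x)⁻¹⌋ :=
    Int.le_floor.2 (by simpa using (one_le_inv₀ h0).2 h1.le)
  rw [pq, Nat.add_sub_cancel]
  lia

theorem pq_succ_add_iterate_gaussMap (hx : x ∈ Set.Ico (0 : ℝ) 1) (hirr : Irrational x) (n : ℕ) :
    (pq x (n + 1) : ℝ) + gaussMap^[n + 1] x = (gaussMap^[n] x)⁻¹ := by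
  have hfloor : 0 ≤ ⌊(gaussMap^[n] x)⁻¹⌋ :=
    Int.floor_nonneg.2 (inv_nonneg.2 (iterate_gaussMap_mem_Ioo hx hirr n).1.le)
  rw [pq, Nat.add_sub_cancel, ← Int.cast_natCast, Int.toNat_of_nonneg hfloor,
    Function.iterate_succ_apply', gaussMap, Int.floor_add_fract]

theorem cfQ_mul_prod_add_cfQ_mul_prod (hx : x ∈ Set.Ico (0 : ℝ) 1) (hirr : Irrational x) (n : ℕ) :
    (cfQ (pq x) (n + 1) : ℝ) * ∏ i ∈ Finset.range n, gaussMap^[i] x +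
      cfQ (pq x) n * ∏ i ∈ Finset.range (n + 1), gaussMap^[i] x = 1 := by
  induction n with
  | zero => simp [cfQ]
  | succ n ih =>
    have hinv : gaussMap^[n] x * (pq x (n + 1) + gaussMap^[n + 1] x) = 1 := by
      rw [pq_succ_add_iterate_gaussMap hx hirr,
        mul_inv_cancel₀ (irrational_iterate_gaussMap hirr n).ne_zero]
    rw [cfQ, Finset.prod_range_succ _ (n + 1)]
    rw [Finset.prod_range_succ _ n] at ih ⊢
    push_cast
    linear_combination ih +
      (cfQ (pq x) (n + 1) : ℝ) * (∏ i ∈ Finset.range n, gaussMap^[i] x) * hinv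

theorem cfQ_nonneg (a : ℕ → ℕ) : ∀ n, 0 ≤ cfQ a n
  | 0 => le_rfl
  | 1 => zero_le_one
  | n + 2 => add_nonneg (mul_nonneg (Int.natCast_nonneg _) (cfQ_nonneg a (n + 1))) (cfQ_nonneg a n)

theorem monotone_cfQ {a : ℕ → ℕ} (ha : ∀ n, 1 ≤ a (n + 1)) : Monotone (cfQ a) := by
  refine monotone_nat_of_le_succ fun n => ?_
  cases n with
  | zero => exact zero_le_one
  | succ n =>
    have hmul : cfQ a (n + 1) ≤ a (n + 1) * cfQ a (n + 1) :=
      le_mul_of_one_le_left (cfQ_nonneg a _) (by exact_mod_cast ha n)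
    rw [cfQ]
    linarith [cfQ_nonneg a n]

theorem qden_mul_prod_mem_Icc (hx : x ∈ Set.Ico (0 : ℝ) 1) (hirr : Irrational x) (n : ℕ) :
    (qden x n : ℝ) * ∏ i ∈ Finset.range n, gaussMap^[i] x ∈ Set.Icc (1 / 2 : ℝ) 1 := by
  have horbit := iterate_gaussMap_mem_Ioo hx hirr
  have hid := cfQ_mul_prod_add_cfQ_mul_prod hx hirr n
  have hprod : 0 < ∏ i ∈ Finset.range n, gaussMap^[i] x := Finset.prod_pos fun i _ => (horbit i).1
  have hprod_succ : 0 < ∏ i ∈ Finset.range (n + 1), gaussMap^[i] x :=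
    Finset.prod_pos fun i _ => (horbit i).1
  have hprod_le : ∏ i ∈ Finset.range (n + 1), gaussMap^[i] x ≤
      ∏ i ∈ Finset.range n, gaussMap^[i] x := by
    rw [Finset.prod_range_succ]
    exact mul_le_of_le_one_right hprod.le (horbit n).2.le
  have hq0 : (0 : ℝ) ≤ cfQ (pq x) n := by exact_mod_cast cfQ_nonneg _ n
  have hq1 : (cfQ (pq x) n : ℝ) ≤ qden x n := by
    exact_mod_cast monotone_cfQ (one_le_pq_succ hx hirr) n.le_succ
  rw [← qden] at hid
  constructor
  · linarith [mul_le_mul hq1 hprod_le hprod_succ.le (hq0.trans hq1)]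
  · linarith [mul_nonneg hq0 hprod_succ.le]

theorem abs_log_qden_sub_birkhoffSum_le (hx : x ∈ Set.Ico (0 : ℝ) 1) (hirr : Irrational x)
    (n : ℕ) : |log (qden x n) - birkhoffSum gaussMap (fun z => -log z) n x| ≤ log 2 := by
  have horbit (i : ℕ) : 0 < gaussMap^[i] x := (iterate_gaussMap_mem_Ioo hx hirr i).1
  have hprod : 0 < ∏ i ∈ Finset.range n, gaussMap^[i] x := Finset.prod_pos fun i _ => horbit i
  obtain ⟨hge, hle⟩ := qden_mul_prod_mem_Icc hx hirr n
  have hq : 0 < (qden x n : ℝ) := pos_of_mul_pos_left (one_half_pos.trans_le hge) hprod.le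
  have hlog : log (qden x n) - birkhoffSum gaussMap (fun z => -log z) n x =
      log (qden x n * ∏ i ∈ Finset.range n, gaussMap^[i] x) := by
    rw [log_mul hq.ne' hprod.ne', birkhoffSum, log_prod fun i _ => (horbit i).ne',
      Finset.sum_neg_distrib, sub_neg_eq_add]
  rw [hlog, abs_le, ← log_inv, ← one_div]
  exact ⟨log_le_log one_half_pos hge,
    (log_nonpos (by positivity) hle).trans (log_nonneg one_le_two)⟩

theorem le_abs_birkhoffSum_sub (hx : x ∈ Set.Ico (0 : ℝ) 1) (hirr : Irrational x) {n : ℕ}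
    (hn : 0 < n) {δ L : ℝ} (hδ : δ ≤ |1 / (n : ℝ) * log (qden x n) - L|) :
    n * δ - log 2 ≤ |birkhoffSum gaussMap (fun z => -log z) n x - n * L| := by
  have hn0 : (0 : ℝ) < n := by exact_mod_cast hn
  have hscale : 1 / (n : ℝ) * log (qden x n) - L = (log (qden x n) - n * L) / n := by field_simp
  rw [hscale, abs_div, abs_of_pos hn0, le_div_iff₀' hn0] at hδ
  have htri := abs_sub_le (log (qden x n))
    (birkhoffSum gaussMap (fun z => -log z) n x) (n * L)
  linarith [abs_log_qden_sub_birkhoffSum_le hx hirr n]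

end Denominators

/-- **Chernoff-type estimate for the Lévy constant.** For every `δ > 0` there
are `N > 0`, `B > 0`, `α > 0` such that for all `n ≥ N`, the Lebesgue measure of
the set of irrational `x ∈ [0,1)` with
`|(1/n) log q_n(x) − π²/(12 log 2)| ≥ δ` is at most `B exp(−α n)`. -/
theorem levy_chernoff (δ : ℝ) (hδ : 0 < δ) :
    ∃ (N : ℕ) (B α : ℝ), 0 < N ∧ 0 < B ∧ 0 < α ∧ ∀ n : ℕ, N ≤ n →
      volume {x : ℝ | x ∈ Set.Ico (0:ℝ) 1 ∧ Irrational x ∧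
          δ ≤ |(1 / (n : ℝ)) * Real.log ((qden x n : ℝ)) - π ^ 2 / (12 * Real.log 2)|} ≤
        ENNReal.ofReal (B * Real.exp (-α * n)) := by
  obtain ⟨B, hB, α, hα, hdev⟩ :=
    exists_gaussMeasure_birkhoffSum_neg_log_deviation_le hδ (log 2)
  refine ⟨1, 2 * log 2 * B, α, one_pos, by positivity, hα, fun n hn => ?_⟩
  set E := {x | n * δ - log 2 ≤
    |birkhoffSum gaussMap (fun z => -log z) n x - n * (π ^ 2 / (12 * log 2))|}
  calc _ ≤ volume (E ∩ Set.Ioo 0 1) := by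
        refine measure_mono fun x ⟨hx, hirr, hδx⟩ => ?_
        exact ⟨le_abs_birkhoffSum_sub hx hirr hn hδx, hx.1.lt_of_ne' hirr.ne_zero, hx.2⟩
    _ ≤ ENNReal.ofReal (2 * log 2) * gaussMeasure E := volume_inter_Ioo_le_gaussMeasure E
    _ ≤ ENNReal.ofReal (2 * log 2) * ENNReal.ofReal (B * exp (-α * n)) := by
        gcongr
        exact hdev n
    _ = ENNReal.ofReal (2 * log 2 * B * exp (-α * n)) := by
        rw [← ENNReal.ofReal_mul (by positivity), mul_assoc (2 * log 2)]
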